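/- arXiv:1808.05169 — 3 statements merged into one kernel-verified Lean document; each statement's English description precedes it below -/
import Mathlib

section
/- There exist ε > 0 and C > 0 such that for every Δt ∈ [0, ε), with β(Δt) the unique solution in (0, σ_K/σ_S] of the monopoly quartic equation and λ(Δt) := β(Δt)σ_S²/(σ_K² + β(Δt)²σ_S²), one has λ(Δt)·β(Δt) < 1 and |λ(Δt) − (σ_S/(2σ_K) − (γ/8)Δt)| ≤ C·(Δt)^{3/2}. -/
/-!
In the unknown `x = β σS / σK`, with `r = ρ Δt` and `a = γ (σK / σS) Δt`, the quartic becomes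
`(1 - x²) (1 - (1 - r) x²) = a x (1 + x²)`. For `r ≤ 1` both factors on the left decrease on
`(0, 1]`, and they are nonnegative at a root, so of two roots the larger one would have the smaller
left-hand side, while the right-hand side increases: the root is unique. Since the right-hand side
is at most `2 a`, the defect `1 - x²` is at most `|r| + √(2 a)`, which is `O(√Δt)`. Finally,
`λ = (σS / σK) x / (1 + x²)`, and inserting the quartic into
`1/2 - x / (1 + x²) = (1 - x)² / (2 (1 + x²))` leaves `a / 8` up to terms bounded by `a (1 - x²)`
and `|r| (1 - x²)`.
-/

open Set

/-- The monopoly quartic in `β`, with `s = σK / σS` the volatility ratio and `h = Δt` the length of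
a trading period. Its root in `(0, s]` is the equilibrium trading intensity. -/
def monopolyQuartic (s γ ρ h β : ℝ) : ℝ :=
  (1 - ρ * h) * β ^ 4 - (2 - ρ * h + β * γ * h) * s ^ 2 * β ^ 2 + s ^ 4 * (1 - β * γ * h)

/-- The price impact `λ` of the order flow when the trading intensity is `β`: the
quantity whose expansion in `Δt` is sought. -/
noncomputable def priceImpact (σS σK β : ℝ) : ℝ :=
  β * σS ^ 2 / (σK ^ 2 + β ^ 2 * σS ^ 2)

/-- The monopoly quartic in the dimensionless unknown `x = β σS / σK`, divided by `(σK / σS) ^ 4`,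
where `r = ρ Δt` and `a = γ (σK / σS) Δt`. The part free of `a` is written in factored form, which
is what the uniqueness of the root rests on. -/
def normalizedQuartic (r a x : ℝ) : ℝ :=
  (1 - x ^ 2) * (1 - (1 - r) * x ^ 2) - a * x * (1 + x ^ 2)

lemma monopolyQuartic_eq_mul_normalizedQuartic {s : ℝ} (hs : s ≠ 0) (γ ρ h β : ℝ) :
    monopolyQuartic s γ ρ h β = s ^ 4 * normalizedQuartic (ρ * h) (γ * s * h) (β / s) := by
  unfold monopolyQuartic normalizedQuartic
  field_simp
  ring

lemma monopolyQuartic_eq_zero_iff {s : ℝ} (hs : s ≠ 0) (γ ρ h β : ℝ) :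
    monopolyQuartic s γ ρ h β = 0 ↔ normalizedQuartic (ρ * h) (γ * s * h) (β / s) = 0 := by
  rw [monopolyQuartic_eq_mul_normalizedQuartic hs, mul_eq_zero_iff_left (pow_ne_zero 4 hs)]

lemma div_mem_Ioc_zero_one_iff {s : ℝ} (hs : 0 < s) (β : ℝ) :
    β / s ∈ Ioc 0 1 ↔ β ∈ Ioc 0 s := by
  rw [mem_Ioc, mem_Ioc, div_pos_iff_of_pos_right hs, div_le_one hs]

lemma exists_normalizedQuartic_eq_zero (r : ℝ) {a : ℝ} (ha : 0 ≤ a) :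
    ∃ x ∈ Ioc (0 : ℝ) 1, normalizedQuartic r a x = 0 := by
  have hcont : ContinuousOn (normalizedQuartic r a) (Icc 0 1) := by
    unfold normalizedQuartic
    fun_prop
  have hzero : normalizedQuartic r a 0 = 1 := by simp [normalizedQuartic]
  have hone : normalizedQuartic r a 1 ≤ 0 := by norm_num [normalizedQuartic, ha]
  obtain ⟨x, ⟨hx0, hx1⟩, hx⟩ :=
    intermediate_value_Icc' zero_le_one hcont ⟨hone, hzero ▸ zero_le_one⟩
  have hxne : x ≠ 0 := by
    rintro rfl
    exact one_ne_zero (hzero.symm.trans hx)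
  exact ⟨x, ⟨lt_of_le_of_ne hx0 hxne.symm, hx1⟩, hx⟩

section Roots

variable {r a x y : ℝ}

lemma one_sub_mul_sq_nonneg_of_normalizedQuartic_eq_zero (har : 0 < a ∨ 0 ≤ r)
    (hx : x ∈ Ioc 0 1) (hroot : normalizedQuartic r a x = 0) : 0 ≤ 1 - (1 - r) * x ^ 2 := by
  obtain ⟨hx0, hx1⟩ := hx
  have hu : 0 ≤ 1 - x ^ 2 := sub_nonneg.2 (pow_le_one₀ hx0.le hx1)
  rcases har with ha | hr
  · have hprod : 0 < (1 - x ^ 2) * (1 - (1 - r) * x ^ 2) := by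
      rw [sub_eq_zero.1 hroot]
      positivity
    exact (pos_of_mul_pos_right hprod hu).le
  · linarith [mul_nonneg hr (sq_nonneg x)]

lemma one_sub_sq_mul_lt_of_lt (hr : r ≤ 1) (hx : 0 < x) (hxy : x < y) (hy : y ≤ 1)
    (hv : 0 ≤ 1 - (1 - r) * y ^ 2) :
    (1 - y ^ 2) * (1 - (1 - r) * y ^ 2) < (1 - x ^ 2) * (1 - (1 - r) * x ^ 2) := by
  have hsq : x ^ 2 < y ^ 2 := pow_lt_pow_left₀ hxy hx.le two_ne_zero
  have hu : 0 ≤ 1 - y ^ 2 := sub_nonneg.2 (pow_le_one₀ (hx.trans hxy).le hy)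
  have hv_le : 1 - (1 - r) * y ^ 2 ≤ 1 - (1 - r) * x ^ 2 :=
    sub_le_sub_left (mul_le_mul_of_nonneg_left hsq.le (sub_nonneg.2 hr)) 1
  have hv_pos : 0 < 1 - (1 - r) * x ^ 2 := by
    -- With `v(t) = 1 - (1 - r) t²`, one has `y² v(x) = (y² - x²) + x² v(y)`.
    refine pos_of_mul_pos_right (a := y ^ 2) ?_ (sq_nonneg y)
    linarith [mul_nonneg (sq_nonneg x) hv]
  calc (1 - y ^ 2) * (1 - (1 - r) * y ^ 2)
      ≤ (1 - y ^ 2) * (1 - (1 - r) * x ^ 2) := by gcongr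
    _ < (1 - x ^ 2) * (1 - (1 - r) * x ^ 2) := by gcongr

lemma not_lt_of_normalizedQuartic_eq_zero (hr : r ≤ 1) (ha : 0 ≤ a) (har : 0 < a ∨ 0 ≤ r)
    (hx : x ∈ Ioc 0 1) (hy : y ∈ Ioc 0 1)
    (hxroot : normalizedQuartic r a x = 0) (hyroot : normalizedQuartic r a y = 0) : ¬ x < y := by
  intro hxy
  have hleft := one_sub_sq_mul_lt_of_lt hr hx.1 hxy hy.2
    (one_sub_mul_sq_nonneg_of_normalizedQuartic_eq_zero har hy hyroot)
  have hright : a * x * (1 + x ^ 2) ≤ a * y * (1 + y ^ 2) := by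
    have hx0 := hx.1.le
    have hy0 := hy.1.le
    gcongr
  rw [sub_eq_zero.1 hxroot, sub_eq_zero.1 hyroot] at hleft
  exact hleft.not_ge hright

lemma eq_of_normalizedQuartic_eq_zero (hr : r ≤ 1) (ha : 0 ≤ a) (har : 0 < a ∨ 0 ≤ r)
    (hx : x ∈ Ioc 0 1) (hy : y ∈ Ioc 0 1)
    (hxroot : normalizedQuartic r a x = 0) (hyroot : normalizedQuartic r a y = 0) : x = y :=
  le_antisymm (not_lt.1 (not_lt_of_normalizedQuartic_eq_zero hr ha har hy hx hyroot hxroot))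
    (not_lt.1 (not_lt_of_normalizedQuartic_eq_zero hr ha har hx hy hxroot hyroot))

lemma one_sub_sq_le_of_normalizedQuartic_eq_zero (ha : 0 ≤ a) (hx : x ∈ Ioc 0 1)
    (hroot : normalizedQuartic r a x = 0) : 1 - x ^ 2 ≤ |r| + √(2 * a) := by
  obtain ⟨hx0, hx1⟩ := hx
  have hsq : x ^ 2 ≤ 1 := pow_le_one₀ hx0.le hx1
  have hu : 0 ≤ 1 - x ^ 2 := sub_nonneg.2 hsq
  have hright : a * x * (1 + x ^ 2) ≤ 2 * a := by
    calc a * x * (1 + x ^ 2) ≤ a * 1 * (1 + 1) := by gcongr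
      _ = 2 * a := by ring
  have hrx : -|r| ≤ r * x ^ 2 := by
    refine (abs_le.1 ?_).1
    rw [abs_mul, abs_sq]
    exact mul_le_of_le_one_right (abs_nonneg r) hsq
  have hprod : (1 - x ^ 2) * (1 - x ^ 2 - |r|) ≤ 2 * a :=
    calc (1 - x ^ 2) * (1 - x ^ 2 - |r|)
        ≤ (1 - x ^ 2) * (1 - (1 - r) * x ^ 2) := mul_le_mul_of_nonneg_left (by linarith) hu
      _ = a * x * (1 + x ^ 2) := sub_eq_zero.1 hroot
      _ ≤ 2 * a := hright
  rcases le_total (1 - x ^ 2) |r| with hle | hge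
  · exact hle.trans (le_add_of_nonneg_right (Real.sqrt_nonneg _))
  · refine sub_le_iff_le_add'.1 (Real.le_sqrt_of_sq_le (le_trans ?_ hprod))
    rw [sq]
    exact mul_le_mul_of_nonneg_right (sub_le_self _ (abs_nonneg r)) (sub_nonneg.2 hge)

lemma div_one_add_sq_sub_eq_of_normalizedQuartic_eq_zero (hx : 0 < x)
    (hroot : normalizedQuartic r a x = 0) :
    x / (1 + x ^ 2) - (1 / 2 - a / 8) =
      a * ((1 - x ^ 2) ^ 2 / (8 * (1 + x) ^ 4)) +
        r * (x ^ 2 * (1 - x ^ 2) / (2 * (1 + x) ^ 2 * (1 + x ^ 2))) := by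
  have hdefect : (1 - x ^ 2) ^ 2 = a * x * (1 + x ^ 2) - r * x ^ 2 * (1 - x ^ 2) := by
    unfold normalizedQuartic at hroot
    linear_combination hroot
  calc x / (1 + x ^ 2) - (1 / 2 - a / 8)
      = a / 8 - (1 - x ^ 2) ^ 2 / (2 * (1 + x) ^ 2 * (1 + x ^ 2)) := by field_simp; ring
    _ = a / 8 - (a * x * (1 + x ^ 2) - r * x ^ 2 * (1 - x ^ 2)) /
          (2 * (1 + x) ^ 2 * (1 + x ^ 2)) := by rw [hdefect]
    _ = _ := by field_simp; ring

lemma abs_div_one_add_sq_sub_le_of_normalizedQuartic_eq_zero (ha : 0 ≤ a) (hx : x ∈ Ioc 0 1)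
    (hroot : normalizedQuartic r a x = 0) :
    |x / (1 + x ^ 2) - (1 / 2 - a / 8)| ≤ (a + |r|) * (|r| + √(2 * a)) := by
  have hx0 := hx.1
  have hu : 0 ≤ 1 - x ^ 2 := sub_nonneg.2 (pow_le_one₀ hx0.le hx.2)
  have hu1 : 1 - x ^ 2 ≤ 1 := sub_le_self _ (sq_nonneg x)
  have hfirst : (1 - x ^ 2) ^ 2 / (8 * (1 + x) ^ 4) ≤ 1 - x ^ 2 := by
    have hden : 1 ≤ 8 * (1 + x) ^ 4 := by
      linarith [one_le_pow₀ (le_add_of_nonneg_right hx0.le : 1 ≤ 1 + x) (n := 4)]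
    exact (div_le_self (sq_nonneg _) hden).trans (pow_le_of_le_one hu hu1 two_ne_zero)
  have hsecond : x ^ 2 * (1 - x ^ 2) / (2 * (1 + x) ^ 2 * (1 + x ^ 2)) ≤ 1 - x ^ 2 := by
    have hden : 1 ≤ 2 * (1 + x) ^ 2 * (1 + x ^ 2) := by
      refine one_le_mul_of_one_le_of_one_le ?_ (le_add_of_nonneg_right (sq_nonneg x))
      linarith [one_le_pow₀ (le_add_of_nonneg_right hx0.le : 1 ≤ 1 + x) (n := 2)]
    exact (div_le_self (by positivity) hden).trans
      (mul_le_of_le_one_left hu (pow_le_one₀ hx0.le hx.2))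
  rw [div_one_add_sq_sub_eq_of_normalizedQuartic_eq_zero hx0 hroot]
  calc _ ≤ a * ((1 - x ^ 2) ^ 2 / (8 * (1 + x) ^ 4)) +
        |r| * (x ^ 2 * (1 - x ^ 2) / (2 * (1 + x) ^ 2 * (1 + x ^ 2))) := by
        refine (abs_add_le _ _).trans_eq ?_
        rw [abs_mul, abs_mul, abs_of_nonneg ha,
          abs_of_nonneg (a := _ / (8 * _)) (by positivity),
          abs_of_nonneg (a := _ / (2 * _ * _)) (by positivity)]
    _ ≤ a * (1 - x ^ 2) + |r| * (1 - x ^ 2) := by gcongr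
    _ = (a + |r|) * (1 - x ^ 2) := (add_mul _ _ _).symm
    _ ≤ (a + |r|) * (|r| + √(2 * a)) := by
        gcongr
        exact one_sub_sq_le_of_normalizedQuartic_eq_zero ha hx hroot

end Roots

lemma add_mul_add_sqrt_le_mul_rpow {p q h : ℝ} (hp : 0 ≤ p) (hq : 0 ≤ q) (hh0 : 0 ≤ h)
    (hh1 : h ≤ 1) :
    (p * h + q * h) * (q * h + √(2 * (p * h))) ≤
      (p + q) * (q + √(2 * p)) * h ^ ((3 : ℝ) / 2) := by
  have hrpow : h ^ ((3 : ℝ) / 2) = h * √h := by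
    rw [Real.sqrt_eq_rpow, ← Real.rpow_one_add' hh0 (by norm_num)]
    norm_num
  have hsqrt : √(2 * (p * h)) = √(2 * p) * √h := by
    rw [← mul_assoc, Real.sqrt_mul (by positivity)]
  have hle : h ≤ √h := Real.le_sqrt_of_sq_le (pow_le_of_le_one hh0 hh1 two_ne_zero)
  calc (p * h + q * h) * (q * h + √(2 * (p * h)))
      ≤ (p * h + q * h) * (q * √h + √(2 * p) * √h) := by rw [hsqrt]; gcongr
    _ = (p + q) * (q + √(2 * p)) * h ^ ((3 : ℝ) / 2) := by rw [hrpow]; ring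

section PriceImpact

variable {σS σK : ℝ}

lemma priceImpact_mul_lt_one (hσK : σK ≠ 0) (σS β : ℝ) :
    priceImpact σS σK β * β < 1 := by
  have hσK_sq : 0 < σK ^ 2 := by positivity
  rw [priceImpact, div_mul_eq_mul_div, div_lt_one (by positivity)]
  linarith

lemma priceImpact_sub_eq (hσS : σS ≠ 0) (hσK : σK ≠ 0) (γ h β : ℝ) :
    priceImpact σS σK β - (σS / (2 * σK) - γ / 8 * h) =
      σS / σK * (β / (σK / σS) / (1 + (β / (σK / σS)) ^ 2) -
        (1 / 2 - γ * (σK / σS) * h / 8)) := by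
  unfold priceImpact
  field_simp

lemma abs_priceImpact_sub_le (hσS : 0 < σS) (hσK : 0 < σK) {γ ρ h β : ℝ} (hγ : 0 ≤ γ)
    (hh0 : 0 ≤ h) (hh1 : h ≤ 1) (hβ : β / (σK / σS) ∈ Ioc 0 1)
    (hroot : normalizedQuartic (ρ * h) (γ * (σK / σS) * h) (β / (σK / σS)) = 0) :
    |priceImpact σS σK β - (σS / (2 * σK) - γ / 8 * h)| ≤
      σS / σK * ((γ * (σK / σS) + |ρ|) * (|ρ| + √(2 * (γ * (σK / σS))))) *
        h ^ ((3 : ℝ) / 2) := by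
  have hestimate :=
    abs_div_one_add_sq_sub_le_of_normalizedQuartic_eq_zero (by positivity) hβ hroot
  rw [abs_mul, abs_of_nonneg hh0] at hestimate
  rw [priceImpact_sub_eq hσS.ne' hσK.ne', abs_mul, abs_of_pos (div_pos hσS hσK),
    mul_assoc (σS / σK)]
  gcongr
  exact hestimate.trans (add_mul_add_sqrt_le_mul_rpow (by positivity) (abs_nonneg ρ) hh0 hh1)

end PriceImpact

theorem stmt2_general (σS σK γ ρ : ℝ) (hσS : 0 < σS) (hσK : 0 < σK) (hγ : 0 < γ) :
    ∃ ε > 0, ∃ C > 0, ∀ Δt : ℝ, 0 ≤ Δt → Δt < ε →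
      ∃ β : ℝ,
        (β ∈ Set.Ioc 0 (σK / σS) ∧
          0 = (1 - ρ * Δt) * β ^ 4
                - (2 - ρ * Δt + β * γ * Δt) * (σK / σS) ^ 2 * β ^ 2
                + (σK / σS) ^ 4 * (1 - β * γ * Δt)) ∧
        (∀ b : ℝ, b ∈ Set.Ioc 0 (σK / σS) →
          0 = (1 - ρ * Δt) * b ^ 4
                - (2 - ρ * Δt + b * γ * Δt) * (σK / σS) ^ 2 * b ^ 2
                + (σK / σS) ^ 4 * (1 - b * γ * Δt) → b = β) ∧
        (β * σS ^ 2 / (σK ^ 2 + β ^ 2 * σS ^ 2)) * β < 1 ∧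
        |β * σS ^ 2 / (σK ^ 2 + β ^ 2 * σS ^ 2) - (σS / (2 * σK) - γ / 8 * Δt)|
          ≤ C * Δt ^ ((3 : ℝ) / 2) := by
  have hs : 0 < σK / σS := div_pos hσK hσS
  refine ⟨1 / (1 + |ρ|), by positivity,
    σS / σK * ((γ * (σK / σS) + |ρ|) * (|ρ| + √(2 * (γ * (σK / σS))))), by positivity, ?_⟩
  intro Δt hΔt hlt
  rw [lt_div_iff₀ (by positivity)] at hlt
  have hΔt1 : Δt ≤ 1 := by linarith [mul_nonneg hΔt (abs_nonneg ρ)]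
  have hr : ρ * Δt ≤ 1 := by linarith [mul_le_mul_of_nonneg_right (le_abs_self ρ) hΔt]
  have ha : 0 ≤ γ * (σK / σS) * Δt := by positivity
  have har : 0 < γ * (σK / σS) * Δt ∨ 0 ≤ ρ * Δt := by
    rcases hΔt.eq_or_lt with rfl | hpos
    · exact Or.inr (mul_zero ρ).ge
    · exact Or.inl (by positivity)
  obtain ⟨x, hx, hroot⟩ := exists_normalizedQuartic_eq_zero (ρ * Δt) ha
  obtain ⟨β, rfl⟩ : ∃ β, β / (σK / σS) = x := ⟨x * (σK / σS), mul_div_cancel_right₀ x hs.ne'⟩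
  refine ⟨β, ⟨(div_mem_Ioc_zero_one_iff hs β).1 hx,
    ((monopolyQuartic_eq_zero_iff hs.ne' γ ρ Δt β).2 hroot).symm⟩, fun b hb hquartic => ?_,
    priceImpact_mul_lt_one hσK.ne' σS β, abs_priceImpact_sub_le hσS hσK hγ.le hΔt hΔt1 hx hroot⟩
  have hbroot := (monopolyQuartic_eq_zero_iff hs.ne' γ ρ Δt b).1 hquartic.symm
  exact (div_left_inj' hs.ne').1 <| eq_of_normalizedQuartic_eq_zero hr ha har
    ((div_mem_Ioc_zero_one_iff hs b).2 hb) hx hbroot hroot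

/-- with `β(Δt)` the unique solution of the monopoly quartic in
`(0, σ_K/σ_S]` and `λ(Δt) = β σ_S²/(σ_K² + β²σ_S²)`, one has `λβ < 1` and
`λ(Δt) = σ_S/(2σ_K) − (γ/8)Δt + O((Δt)^{3/2})`. -/
theorem stmt2 (σS σK γ ρ : ℝ) (hσS : 0 < σS) (hσK : 0 < σK) (hγ : 0 < γ) (hρ : 0 < ρ) :
    ∃ ε > 0, ∃ C > 0, ∀ Δt : ℝ, 0 ≤ Δt → Δt < ε →
      ∃ β : ℝ,
        (β ∈ Set.Ioc 0 (σK / σS) ∧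
          0 = (1 - ρ * Δt) * β ^ 4
                - (2 - ρ * Δt + β * γ * Δt) * (σK / σS) ^ 2 * β ^ 2
                + (σK / σS) ^ 4 * (1 - β * γ * Δt)) ∧
        (∀ b : ℝ, b ∈ Set.Ioc 0 (σK / σS) →
          0 = (1 - ρ * Δt) * b ^ 4
                - (2 - ρ * Δt + b * γ * Δt) * (σK / σS) ^ 2 * b ^ 2
                + (σK / σS) ^ 4 * (1 - b * γ * Δt) → b = β) ∧
        (β * σS ^ 2 / (σK ^ 2 + β ^ 2 * σS ^ 2)) * β < 1 ∧
        |β * σS ^ 2 / (σK ^ 2 + β ^ 2 * σS ^ 2) - (σS / (2 * σK) - γ / 8 * Δt)|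
          ≤ C * Δt ^ ((3 : ℝ) / 2) :=
  stmt2_general σS σK γ ρ hσS hσK hγ
end

section
/- There exists ε > 0 such that for every Δt ∈ [0, ε) the constrained system — β_Σ = Σ_{j=1}^k β_j; for each i ∈ {1,…,k}, 0 = (1−ρ_iΔt)β_i²β_Σ² − (2−ρ_iΔt + β_Σγ_iΔt)(σ_K/σ_S)²β_iβ_Σ + (σ_K/σ_S)⁴(1−β_iγ_iΔt); 0 < β_Σ; and 0 < β_iβ_Σ ≤ σ_K²/σ_S² for each i — has exactly one solution (β_Σ, β_1, …, β_k) ∈ ℝ^{1+k}. -/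
/-!
Put `c = σ_K² / σ_S²`, `aᵢ = 1 - ρᵢΔt` and `gᵢ = γᵢΔt`. The `i`-th quadratic factors as
`(c - βᵢB) (c - aᵢβᵢB) = gᵢ c βᵢ (B² + c)` with `B = β_Σ`. As long as `ρᵢΔt ≤ 2`, that is
`|aᵢ| ≤ 1`, the left side strictly decreases in `βᵢB ∈ [0, c]`, while the right side increases in
`βᵢ` and in `B`. Hence each `B > 0` determines `βᵢ`, and `βᵢ` is an antitone, continuous function
of `B`. What remains is the equation `B = ∑ βᵢ(B)`, the fixed point equation of a continuous
antitone self-map of `(0, ∞)`: it has at most one solution by antitonicity, and it has one by the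
intermediate value theorem between `1` and the image of `1`.
-/

open Set

theorem existsUnique_mem_isFixedPt_of_antitoneOn {α : Type*} [LinearOrder α] [TopologicalSpace α]
    [OrderClosedTopology α] {s : Set α} {f : α → α} (hs : IsPreconnected s) (hne : s.Nonempty)
    (hcont : ContinuousOn f s) (hanti : AntitoneOn f s) (hmaps : MapsTo f s s) :
    ∃! x, x ∈ s ∧ Function.IsFixedPt f x := by
  refine existsUnique_of_exists_of_unique ?_ ?_
  · obtain ⟨x, hx⟩ := hne
    rcases le_total x (f x) with hle | hle
    · exact hs.intermediate_value₂ (hmaps hx) hx hcont continuousOn_id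
        (hanti hx (hmaps hx) hle) hle
    · exact hs.intermediate_value₂ hx (hmaps hx) hcont continuousOn_id
        hle (hanti (hmaps hx) hx hle)
  · rintro x y ⟨hx, hfx⟩ ⟨hy, hfy⟩
    rcases le_total x y with hle | hle
    · exact hle.antisymm (by simpa only [hfx.eq, hfy.eq] using hanti hx hy hle)
    · exact (hle.antisymm (by simpa only [hfx.eq, hfy.eq] using hanti hy hx hle)).symm

theorem exists_pos_forall_mul_le {ι : Type*} [Finite ι] (f : ι → ℝ) {M : ℝ} (hM : 0 < M) :
    ∃ ε > 0, ∀ t : ℝ, 0 ≤ t → t < ε → ∀ i, f i * t ≤ M := by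
  obtain ⟨C, hC⟩ := Finite.exists_le f
  have hpos : 0 < max C 1 := lt_max_of_lt_right one_pos
  refine ⟨M / max C 1, by positivity, fun t ht₀ ht i => ?_⟩
  calc f i * t ≤ max C 1 * t := by gcongr; exact (hC i).trans (le_max_left C 1)
    _ ≤ M := ((lt_div_iff₀' hpos).1 ht).le

theorem strictAntiOn_sub_mul_sub_mul {c a : ℝ} (ha₁ : -1 ≤ a) (ha₂ : a ≤ 1) :
    StrictAntiOn (fun y => (c - y) * (c - a * y)) (Icc 0 c) := by
  intro x hx y hy hxy
  have hfactor : 0 < (1 + a) * c - a * (x + y) := by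
    -- Twice this factor is `(1 + a) * (2 * c - (x + y)) + (1 - a) * (x + y)`.
    have hsum : 0 < x + y := by linarith [hx.1]
    have hcosum : 0 < 2 * c - (x + y) := by linarith [hy.2]
    rcases ha₁.eq_or_lt with rfl | ha₁
    · linarith
    · linarith [mul_pos (neg_lt_iff_pos_add'.1 ha₁) hcosum,
        mul_nonneg (sub_nonneg.2 ha₂) hsum.le]
  have hdiff : (c - x) * (c - a * x) - (c - y) * (c - a * y)
      = (y - x) * ((1 + a) * c - a * (x + y)) := by ring
  exact sub_pos.1 (hdiff ▸ mul_pos (sub_pos.2 hxy) hfactor)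

/-- `b` is an admissible trading intensity of a single HFT when the aggregate intensity is `B`.
Here `c = σ_K² / σ_S²`, `a = 1 - ρΔt` and `g = γΔt`; the equilibrium quadratic is factored, and
the constraint `0 < b * B` is recorded as `0 < b` because only `B > 0` matters. -/
structure IsTradingIntensity (c a g B b : ℝ) : Prop where
  pos : 0 < b
  mul_le : b * B ≤ c
  mul_eq : (c - b * B) * (c - a * (b * B)) = g * c * b * (B ^ 2 + c)

/-- The admissible trading intensity in closed form. It comes from the quadratic
`c² z² - c m z + a B² = 0` for `z = b⁻¹`, where `m = (1 + a) B + g (B² + c)`; the larger root `z`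
is the one with `b * B ≤ c`. -/
noncomputable def tradingIntensity (c a g B : ℝ) : ℝ :=
  2 * c / ((1 + a) * B + g * (B ^ 2 + c)
    + √(((1 + a) * B + g * (B ^ 2 + c)) ^ 2 - 4 * a * B ^ 2))

section TradingIntensity

variable {c a g B : ℝ}

theorem isTradingIntensity_iff_quadratic {r b : ℝ} (hB : 0 < B) :
    IsTradingIntensity c (1 - r) g B b ↔
      0 = (1 - r) * b ^ 2 * B ^ 2 - (2 - r + B * g) * c * b * B + c ^ 2 * (1 - b * g) ∧
        0 < b * B ∧ b * B ≤ c := by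
  constructor
  · rintro ⟨hb, hle, heq⟩
    exact ⟨by linear_combination -heq, mul_pos hb hB, hle⟩
  · rintro ⟨heq, hpos, hle⟩
    exact ⟨pos_of_mul_pos_left hpos hB.le, hle, by linear_combination -heq⟩

theorem IsTradingIntensity.anti {B' b b' : ℝ} (hc : 0 < c) (ha₁ : -1 ≤ a) (ha₂ : a ≤ 1)
    (hg : 0 ≤ g) (hB : 0 < B) (hBB' : B ≤ B') (h : IsTradingIntensity c a g B b)
    (h' : IsTradingIntensity c a g B' b') : b' ≤ b := by
  by_contra! hlt
  have hb := h.pos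
  have hb' := h'.pos
  have hlt_mul : b * B < b' * B' := mul_lt_mul hlt hBB' hB hb'.le
  have hdecr : (c - b' * B') * (c - a * (b' * B')) < (c - b * B) * (c - a * (b * B)) :=
    strictAntiOn_sub_mul_sub_mul ha₁ ha₂ ⟨by positivity, h.mul_le⟩
      ⟨(mul_pos hb hB).le.trans hlt_mul.le, h'.mul_le⟩ hlt_mul
  have hincr : g * c * b * (B ^ 2 + c) ≤ g * c * b' * (B' ^ 2 + c) := by gcongr
  rw [h.mul_eq, h'.mul_eq] at hdecr
  exact hincr.not_gt hdecr

theorem sq_le_discrim_tradingIntensity (hc : 0 ≤ c) (ha : -1 ≤ a) (hg : 0 ≤ g) (hB : 0 ≤ B) :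
    ((1 - a) * B) ^ 2 ≤ ((1 + a) * B + g * (B ^ 2 + c)) ^ 2 - 4 * a * B ^ 2 := by
  have hcost : 0 ≤ g * (B ^ 2 + c) := by positivity
  have hlin : 0 ≤ (1 + a) * B := mul_nonneg (by linarith) hB
  nlinarith [mul_nonneg hlin hcost]

theorem two_mul_le_denom_tradingIntensity (hc : 0 ≤ c) (ha : -1 ≤ a) (hg : 0 ≤ g) (hB : 0 ≤ B) :
    2 * B ≤ (1 + a) * B + g * (B ^ 2 + c)
      + √(((1 + a) * B + g * (B ^ 2 + c)) ^ 2 - 4 * a * B ^ 2) := by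
  have hcost : 0 ≤ g * (B ^ 2 + c) := by positivity
  have hsqrt := Real.le_sqrt_of_sq_le (sq_le_discrim_tradingIntensity hc ha hg hB)
  linarith

theorem isTradingIntensity_tradingIntensity (hc : 0 < c) (ha : -1 ≤ a) (hg : 0 ≤ g)
    (hB : 0 < B) : IsTradingIntensity c a g B (tradingIntensity c a g B) := by
  have hsq := Real.sq_sqrt
    ((sq_nonneg _).trans (sq_le_discrim_tradingIntensity hc.le ha hg hB.le))
  have hdenom := two_mul_le_denom_tradingIntensity hc.le ha hg hB.le
  unfold tradingIntensity
  set m := (1 + a) * B + g * (B ^ 2 + c) with hm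
  set s := √(m ^ 2 - 4 * a * B ^ 2)
  have hpos : 0 < m + s := by linarith
  refine ⟨by positivity, ?_, ?_⟩
  · rw [div_mul_eq_mul_div, div_le_iff₀ hpos]
    nlinarith
  · field_simp
    linear_combination hsq + 2 * (m + s) * hm

theorem isTradingIntensity_iff_eq {b : ℝ} (hc : 0 < c) (ha₁ : -1 ≤ a) (ha₂ : a ≤ 1)
    (hg : 0 ≤ g) (hB : 0 < B) :
    IsTradingIntensity c a g B b ↔ b = tradingIntensity c a g B := by
  have hspec := isTradingIntensity_tradingIntensity hc ha₁ hg hB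
  refine ⟨fun h => ?_, fun h => h ▸ hspec⟩
  exact le_antisymm (hspec.anti hc ha₁ ha₂ hg hB le_rfl h)
    (h.anti hc ha₁ ha₂ hg hB le_rfl hspec)

theorem antitoneOn_tradingIntensity (hc : 0 < c) (ha₁ : -1 ≤ a) (ha₂ : a ≤ 1) (hg : 0 ≤ g) :
    AntitoneOn (tradingIntensity c a g) (Ioi 0) := fun _ hB _ hB' hle =>
  (isTradingIntensity_tradingIntensity hc ha₁ hg hB).anti hc ha₁ ha₂ hg hB hle
    (isTradingIntensity_tradingIntensity hc ha₁ hg hB')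

theorem continuousOn_tradingIntensity (hc : 0 ≤ c) (ha : -1 ≤ a) (hg : 0 ≤ g) :
    ContinuousOn (tradingIntensity c a g) (Ioi 0) := by
  refine continuousOn_const.div (by fun_prop) fun B (hB : 0 < B) => ?_
  have hdenom := two_mul_le_denom_tradingIntensity hc ha hg hB.le
  exact (by linarith : (0 : ℝ) < _).ne'

end TradingIntensity

theorem existsUnique_isFixedPt_sum_tradingIntensity {ι : Type*} [Fintype ι] [Nonempty ι] {c : ℝ}
    {a g : ι → ℝ} (hc : 0 < c) (ha₁ : ∀ i, -1 ≤ a i) (ha₂ : ∀ i, a i ≤ 1) (hg : ∀ i, 0 ≤ g i) :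
    ∃! B, B ∈ Ioi 0 ∧ Function.IsFixedPt (fun B => ∑ i, tradingIntensity c (a i) (g i) B) B := by
  refine existsUnique_mem_isFixedPt_of_antitoneOn isPreconnected_Ioi nonempty_Ioi ?_ ?_ ?_
  · exact continuousOn_finsetSum _ fun i _ => continuousOn_tradingIntensity hc.le (ha₁ i) (hg i)
  · exact fun B hB B' hB' hle => Finset.sum_le_sum fun i _ =>
      antitoneOn_tradingIntensity hc (ha₁ i) (ha₂ i) (hg i) hB hB' hle
  · exact fun B hB => Finset.sum_pos
      (fun i _ => (isTradingIntensity_tradingIntensity hc (ha₁ i) (hg i) hB).pos)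
      Finset.univ_nonempty

theorem stmt6_general {ι : Type*} [Fintype ι] [Nonempty ι] {σS σK Δt : ℝ} {γ ρ : ι → ℝ}
    (hσS : σS ≠ 0) (hσK : σK ≠ 0) (hΔt : 0 ≤ Δt) (hγ : ∀ i, 0 ≤ γ i) (hρ : ∀ i, 0 ≤ ρ i)
    (hρΔt : ∀ i, ρ i * Δt ≤ 2) :
    ∃! p : ℝ × (ι → ℝ),
      p.1 = ∑ j, p.2 j ∧
      (∀ i, 0 = (1 - ρ i * Δt) * (p.2 i) ^ 2 * p.1 ^ 2
          - (2 - ρ i * Δt + p.1 * γ i * Δt) * (σK / σS) ^ 2 * p.2 i * p.1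
          + (σK / σS) ^ 4 * (1 - p.2 i * γ i * Δt)) ∧
      0 < p.1 ∧
      (∀ i, 0 < p.2 i * p.1 ∧ p.2 i * p.1 ≤ σK ^ 2 / σS ^ 2) := by
  have hc : 0 < (σK / σS) ^ 2 := by positivity
  rw [← div_pow, show (σK / σS) ^ 4 = ((σK / σS) ^ 2) ^ 2 by ring]
  generalize (σK / σS) ^ 2 = c at hc ⊢
  have ha₁ (i) : -1 ≤ 1 - ρ i * Δt := by linarith [hρΔt i]
  have ha₂ (i) : 1 - ρ i * Δt ≤ 1 := by linarith [mul_nonneg (hρ i) hΔt]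
  have hg (i) : 0 ≤ γ i * Δt := mul_nonneg (hγ i) hΔt
  have hequation {B : ℝ} (hB : 0 < B) (b : ℝ) (i : ι) :=
    (isTradingIntensity_iff_quadratic hB).symm.trans
      (isTradingIntensity_iff_eq (b := b) hc (ha₁ i) (ha₂ i) (hg i) hB)
  simp only [← mul_assoc] at hequation
  obtain ⟨B, ⟨hB, hfix⟩, hunique⟩ := existsUnique_isFixedPt_sum_tradingIntensity hc ha₁ ha₂ hg
  refine ⟨(B, fun i => tradingIntensity c (1 - ρ i * Δt) (γ i * Δt) B), ?_, ?_⟩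
  · have hsolves (i) := (hequation hB _ i).2 rfl
    exact ⟨hfix.symm, fun i => (hsolves i).1, hB, fun i => (hsolves i).2⟩
  · rintro ⟨B', b⟩ ⟨hsum, hquad, hB', hbound⟩
    obtain rfl : b = fun i => tradingIntensity c (1 - ρ i * Δt) (γ i * Δt) B' :=
      funext fun i => (hequation hB' (b i) i).1 ⟨hquad i, hbound i⟩
    obtain rfl : B' = B := hunique B' ⟨hB', hsum.symm⟩
    rfl

/-- for sufficiently small `Δt ≥ 0`, the constrained system for
`(β_Σ, β_1, …, β_k)` — `β_Σ = Σ_j β_j`; the `k` quadratic equilibrium equations;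
`0 < β_Σ`; and `0 < β_iβ_Σ ≤ σ_K²/σ_S²` — has exactly one solution. -/
theorem stmt6 (k : ℕ) (hk : 1 ≤ k) (σS σK : ℝ) (hσS : 0 < σS) (hσK : 0 < σK)
    (γ ρ : Fin k → ℝ) (hγ : ∀ i, 0 < γ i) (hρ : ∀ i, 0 < ρ i) :
    ∃ ε > 0, ∀ Δt : ℝ, 0 ≤ Δt → Δt < ε →
      ∃! p : ℝ × (Fin k → ℝ),
        p.1 = ∑ j, p.2 j ∧
        (∀ i, 0 = (1 - ρ i * Δt) * (p.2 i) ^ 2 * p.1 ^ 2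
            - (2 - ρ i * Δt + p.1 * γ i * Δt) * (σK / σS) ^ 2 * p.2 i * p.1
            + (σK / σS) ^ 4 * (1 - p.2 i * γ i * Δt)) ∧
        0 < p.1 ∧
        (∀ i, 0 < p.2 i * p.1 ∧ p.2 i * p.1 ≤ σK ^ 2 / σS ^ 2) := by
  have : Nonempty (Fin k) := ⟨⟨0, hk⟩⟩
  obtain ⟨ε, hε, hsmall⟩ := exists_pos_forall_mul_le ρ two_pos
  exact ⟨ε, hε, fun Δt h₀ hlt => stmt6_general hσS.ne' hσK.ne' h₀ (fun i => (hγ i).le)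
    (fun i => (hρ i).le) (hsmall Δt h₀ hlt)⟩
end

section
/- There exist ε > 0, C > 0 and functions β_Σ, β_1, …, β_k : [0, ε) → ℝ such that for every Δt ∈ [0, ε), (β_Σ(Δt), β_1(Δt), …, β_k(Δt)) is the unique solution of the constrained system, and for each i, |β_i(Δt) − (k^{−1/2}(σ_K/σ_S) − ((1+k)^{1/2}/(2k^{3/4}))(2γ_i^{1/2} − (1/k)Σ_{j=1}^k γ_j^{1/2})(σ_K/σ_S)^{3/2}·√Δt)| ≤ C·Δt and |β_Σ(Δt) − (k^{1/2}(σ_K/σ_S) − ((1+k)^{1/2}/(2k^{3/4}))·Σ_{j=1}^k γ_j^{1/2}·(σ_K/σ_S)^{3/2}·√Δt)| ≤ C·Δt. -/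
/-!
Write `s = σ_K / σ_S` and `x_i = β_i β_Σ / s²`. The `i`-th equation becomes
`(1 - x_i) (1 - (1 - ρ_i Δt) x_i) = γ_i Δt (β_Σ x_i + β_i)`.

*Uniqueness.* If `ρ_i Δt ≤ 1`, then on `x_i ≤ 1` the left side decreases in `x_i`, and the right
side increases in `β_Σ` and `β_i`. So between two solutions a larger `β_Σ` forces every `β_i` to be
smaller; since `β_Σ` is the sum of the `β_i`, the two solutions agree.

*Existence and expansion.* Put `τ = √Δt`, `β_Σ = s b` and `x_i = 1 / (1 + τ u_i)`. Then `u_i` is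
the nonnegative root of `u² + ρ_i τ u = γ_i s (b + 1/b) (1 + τ u)`, a smooth function of `(τ, b)`
even at `τ = 0`, and the only remaining equation is `b² = ∑ 1 / (1 + τ u_i)`, which reads `b² = k`
at `τ = 0`. The implicit function theorem gives a smooth branch `b(τ)`, and the expansion is its
Taylor formula in `τ`, with remainder `O(τ²) = O(Δt)`.
-/

open Filter Topology Asymptotics

lemma isBigO_sub_add_smul_deriv {E : Type*} [NormedAddCommGroup E] [NormedSpace ℝ E]
    {f : ℝ → E} {f' : E} {x₀ : ℝ} (hf : ContDiffAt ℝ 2 f x₀) (hf' : HasDerivAt f f' x₀) :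
    (fun x ↦ f x - (f x₀ + (x - x₀) • f')) =O[𝓝[≥] x₀] fun x ↦ (x - x₀) ^ 2 := by
  obtain ⟨u, hu, hfu⟩ := hf.contDiffOn le_rfl (by simp)
  obtain ⟨b, hb, hbu⟩ := mem_nhdsGE_iff_exists_Icc_subset.1 (mem_nhdsWithin_of_mem_nhds hu)
  obtain ⟨C, hC⟩ := exists_taylor_mean_remainder_bound hb.le (n := 1) (hfu.mono hbu)
  have hderiv : derivWithin f (Set.Icc x₀ b) x₀ = f' :=
    hf'.hasDerivWithinAt.derivWithin (uniqueDiffOn_Icc hb x₀ (Set.left_mem_Icc.2 hb.le))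
  refine IsBigO.of_bound C ?_
  filter_upwards [Icc_mem_nhdsGE hb] with x hx
  simpa [taylorWithinEval_succ, iteratedDerivWithin_one, hderiv] using hC x hx

section Equilibrium

variable {ι : Type*} [Fintype ι]

/-- The constrained system of the informal statement for the unknowns `B = β_Σ` and `β`, with
`s = σ_K / σ_S`. -/
def IsEquilibrium (s Δt : ℝ) (γ ρ : ι → ℝ) (B : ℝ) (β : ι → ℝ) : Prop :=
  B = ∑ j, β j ∧
    (∀ i, 0 = (1 - ρ i * Δt) * β i ^ 2 * B ^ 2
      - (2 - ρ i * Δt + B * γ i * Δt) * s ^ 2 * β i * B + s ^ 4 * (1 - β i * γ i * Δt)) ∧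
    0 < B ∧ ∀ i, 0 < β i * B ∧ β i * B ≤ s ^ 2

/-- The candidate solution `(β_Σ, β)` in the coordinates `β_Σ = s b` and
`β_i β_Σ / s² = 1 / (1 + τ u_i)`, in which the system stays regular at `τ = √Δt = 0`. -/
noncomputable def profile (s τ b : ℝ) (u : ι → ℝ) : ℝ × (ι → ℝ) :=
  (s * b, fun i ↦ s * ((1 + τ * u i)⁻¹ / b))

lemma equilibrium_eq_iff {s Δt γ ρ B β x : ℝ} (hs : s ≠ 0) (hx : β * B = s ^ 2 * x) :
    0 = (1 - ρ * Δt) * β ^ 2 * B ^ 2 - (2 - ρ * Δt + B * γ * Δt) * s ^ 2 * β * B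
        + s ^ 4 * (1 - β * γ * Δt) ↔
      (1 - x) * (1 - (1 - ρ * Δt) * x) = γ * Δt * (B * x + β) := by
  have factored : (1 - ρ * Δt) * β ^ 2 * B ^ 2 - (2 - ρ * Δt + B * γ * Δt) * s ^ 2 * β * B
      + s ^ 4 * (1 - β * γ * Δt)
        = s ^ 4 * ((1 - x) * (1 - (1 - ρ * Δt) * x) - γ * Δt * (B * x + β)) := by
    linear_combination ((1 - ρ * Δt) * (β * B + s ^ 2 * x)
      - (2 - ρ * Δt + B * γ * Δt) * s ^ 2) * hx
  rw [factored, zero_eq_mul, or_iff_right (pow_ne_zero 4 hs), sub_eq_zero]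

lemma strictAntiOn_one_sub_mul {a : ℝ} (ha₀ : 0 ≤ a) (ha₁ : a ≤ 1) :
    StrictAntiOn (fun x : ℝ ↦ (1 - x) * (1 - (1 - a) * x)) (Set.Iic 1) := by
  intro x _ y (hy : y ≤ 1) hxy
  have : 0 < (y - x) * (2 - a - (1 - a) * (x + y)) :=
    mul_pos (sub_pos.2 hxy) <| by
      rcases ha₀.eq_or_lt with rfl | ha
      · linarith
      · linear_combination ha + mul_nonneg (sub_nonneg.2 ha₁) (show 0 ≤ 2 - x - y by linarith)
  linear_combination this

namespace IsEquilibrium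

variable {s Δt B B' : ℝ} {γ ρ β β' : ι → ℝ}

lemma le_of_le (hs : s ≠ 0) (hΔt : 0 ≤ Δt) (hγ : ∀ i, 0 ≤ γ i) (hρ₀ : ∀ i, 0 ≤ ρ i)
    (hρ₁ : ∀ i, ρ i * Δt ≤ 1) (h : IsEquilibrium s Δt γ ρ B β)
    (h' : IsEquilibrium s Δt γ ρ B' β') (hB : B ≤ B') : β' ≤ β := by
  intro i
  obtain ⟨-, heq, hpos, hbd⟩ := h
  obtain ⟨-, heq', hpos', hbd'⟩ := h'
  by_contra! hβ
  have hs2 : 0 < s ^ 2 := by positivity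
  have hβ₀ : 0 < β i := pos_of_mul_pos_left (hbd i).1 hpos.le
  have hx : β i * B / s ^ 2 < β' i * B' / s ^ 2 :=
    div_lt_div_of_pos_right (mul_lt_mul hβ hB hpos (hβ₀.trans hβ).le) hs2
  have hx' : β' i * B' / s ^ 2 ≤ 1 := (div_le_one hs2).2 (hbd' i).2
  have hlhs := strictAntiOn_one_sub_mul (mul_nonneg (hρ₀ i) hΔt) (hρ₁ i)
    (Set.mem_Iic.2 (hx.le.trans hx')) (Set.mem_Iic.2 hx') hx
  have hrhs : γ i * Δt * (B * (β i * B / s ^ 2) + β i)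
      ≤ γ i * Δt * (B' * (β' i * B' / s ^ 2) + β' i) := by
    have := hγ i
    gcongr
  have e := (equilibrium_eq_iff hs (mul_div_cancel₀ _ hs2.ne').symm).1 (heq i)
  have e' := (equilibrium_eq_iff hs (mul_div_cancel₀ _ hs2.ne').symm).1 (heq' i)
  exact absurd hrhs (not_le.2 (by simpa only [e, e'] using hlhs))

lemma unique (hs : s ≠ 0) (hΔt : 0 ≤ Δt) (hγ : ∀ i, 0 ≤ γ i) (hρ₀ : ∀ i, 0 ≤ ρ i)
    (hρ₁ : ∀ i, ρ i * Δt ≤ 1) (h : IsEquilibrium s Δt γ ρ B β)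
    (h' : IsEquilibrium s Δt γ ρ B' β') : B = B' ∧ β = β' := by
  wlog hB : B ≤ B' generalizing B B' β β'
  · exact (this h' h (le_of_not_ge hB)).imp Eq.symm Eq.symm
  have hβ : β' ≤ β := h.le_of_le hs hΔt hγ hρ₀ hρ₁ h' hB
  have hB' : B' ≤ B := by
    rw [h.1, h'.1]
    exact Finset.sum_le_sum fun i _ ↦ hβ i
  exact ⟨hB.antisymm hB', (h'.le_of_le hs hΔt hγ hρ₀ hρ₁ h hB').antisymm hβ⟩

end IsEquilibrium

lemma isEquilibrium_profile {s b τ : ℝ} {γ ρ u : ι → ℝ} (hs : 0 < s) (hb : 0 < b) (hτ : 0 ≤ τ)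
    (hu : ∀ i, 0 ≤ u i)
    (hroot : ∀ i, u i ^ 2 + ρ i * τ * u i = γ i * s * (b + b⁻¹) * (1 + τ * u i))
    (hsum : b ^ 2 = ∑ i, (1 + τ * u i)⁻¹) :
    IsEquilibrium s (τ ^ 2) γ ρ (profile s τ b u).1 (profile s τ b u).2 := by
  have hden : ∀ i, 1 ≤ 1 + τ * u i := fun i ↦ le_add_of_nonneg_right (mul_nonneg hτ (hu i))
  have hden₀ : ∀ i, 0 < 1 + τ * u i := fun i ↦ one_pos.trans_le (hden i)
  have hprod : ∀ i, s * ((1 + τ * u i)⁻¹ / b) * (s * b) = s ^ 2 * (1 + τ * u i)⁻¹ := fun i ↦ by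
    field_simp
  refine ⟨?_, fun i ↦ (equilibrium_eq_iff hs.ne' (hprod i)).2 ?_, mul_pos hs hb, fun i ↦ ?_⟩
  · simp only [profile]
    rw [← Finset.mul_sum, ← Finset.sum_div, ← hsum, sq, mul_div_cancel_right₀ _ hb.ne']
  · set x := (1 + τ * u i)⁻¹
    have hx : (1 + τ * u i) * x = 1 := mul_inv_cancel₀ (hden₀ i).ne'
    have hfst : 1 - x = τ * u i * x := by linear_combination -hx
    have hsnd : 1 - (1 - ρ i * τ ^ 2) * x = τ * (u i + ρ i * τ) * x := by linear_combination -hx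
    calc (1 - x) * (1 - (1 - ρ i * τ ^ 2) * x)
        = τ ^ 2 * x ^ 2 * (u i ^ 2 + ρ i * τ * u i) := by rw [hfst, hsnd]; ring
      _ = γ i * τ ^ 2 * (s * (b + b⁻¹) * x) * ((1 + τ * u i) * x) := by rw [hroot]; ring
      _ = γ i * τ ^ 2 * (s * b * x + s * (x / b)) := by rw [hx]; ring
  · simp only [profile, hprod]
    exact ⟨mul_pos (by positivity) (inv_pos.2 (hden₀ i)),
      mul_le_of_le_one_right (sq_nonneg s) (inv_le_one_of_one_le₀ (hden i))⟩

/-- The nonnegative root `u` of `u² + ρ τ u = m (1 + τ u)`, for `m ≥ 0`. -/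
noncomputable def excess (ρ m τ : ℝ) : ℝ :=
  (τ * (m - ρ) + √((τ * (m - ρ)) ^ 2 + 4 * m)) / 2

lemma excess_sq_add {m : ℝ} (hm : 0 ≤ m) (ρ τ : ℝ) :
    excess ρ m τ ^ 2 + ρ * τ * excess ρ m τ = m * (1 + τ * excess ρ m τ) := by
  have := Real.sq_sqrt (show 0 ≤ (τ * (m - ρ)) ^ 2 + 4 * m by positivity)
  unfold excess
  linear_combination this / 4

lemma excess_pos {m : ℝ} (hm : 0 < m) (ρ τ : ℝ) : 0 < excess ρ m τ := by
  have : |τ * (m - ρ)| < √((τ * (m - ρ)) ^ 2 + 4 * m) :=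
    Real.lt_sqrt_of_sq_lt (by rw [sq_abs]; linarith)
  exact half_pos (by linarith [neg_abs_le (τ * (m - ρ))])

lemma excess_zero_right (ρ m : ℝ) : excess ρ m 0 = √m := by
  rw [excess, zero_mul, zero_pow two_ne_zero, zero_add, zero_add,
    show (4 : ℝ) = 2 ^ 2 by norm_num, Real.sqrt_mul (by positivity), Real.sqrt_sq zero_le_two,
    mul_div_cancel_left₀ _ two_ne_zero]

lemma contDiffAt_excess {E : Type*} [NormedAddCommGroup E] [NormedSpace ℝ E] {n : WithTop ℕ∞}
    {m τ : E → ℝ} {p : E} (hm : ContDiffAt ℝ n m p) (hτ : ContDiffAt ℝ n τ p) (hpos : 0 < m p)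
    (ρ : ℝ) : ContDiffAt ℝ n (fun q ↦ excess ρ (m q) (τ q)) p := by
  have : (τ p * (m p - ρ)) ^ 2 + 4 * m p ≠ 0 := by positivity
  unfold excess
  fun_prop (disch := assumption)

lemma exists_contDiffAt_branch {κ : ℝ} (hκ₀ : κ ≠ 0) (hκ : κ ^ 2 = Fintype.card ι)
    {n : WithTop ℕ∞} (hn : n ≠ 0) {R : ι → ℝ × ℝ → ℝ} (hR : ∀ i, ContDiffAt ℝ n (R i) (0, κ)) :
    ∃ b : ℝ → ℝ, ContDiffAt ℝ n b 0 ∧ b 0 = κ ∧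
      ∀ᶠ τ in 𝓝 0, b τ ^ 2 = ∑ i, (1 + τ * R i (τ, b τ))⁻¹ := by
  let G : ℝ × ℝ → ℝ := fun p ↦ p.2 ^ 2 - ∑ i, (1 + p.1 * R i p)⁻¹
  have hden : ∀ i, 1 + ((0, κ) : ℝ × ℝ).1 * R i (0, κ) ≠ 0 := by simp
  have hG : ContDiffAt ℝ n G (0, κ) := by
    refine (contDiffAt_snd.pow 2).sub (ContDiffAt.sum fun i _ ↦ ContDiffAt.inv ?_ (hden i))
    exact contDiffAt_const.add (contDiffAt_fst.mul (hR i))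
  have hG₀ : G (0, κ) = 0 := by simp [G, hκ]
  have hslice : HasDerivAt (fun b ↦ G (0, b)) (2 * κ) κ := by
    simpa [G] using (hasDerivAt_pow 2 κ).sub_const (Fintype.card ι : ℝ)
  have hpartial : fderiv ℝ G (0, κ) ∘L .inr ℝ ℝ ℝ = .toSpanSingleton ℝ (2 * κ) :=
    ((hG.differentiableAt hn).hasFDerivAt.comp κ (hasFDerivAt_prodMk_right 0 κ)).unique
      hslice.hasFDerivAt
  have hinv : (fderiv ℝ G (0, κ) ∘L .inr ℝ ℝ ℝ).IsInvertible := by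
    rw [hpartial]
    exact ⟨.unitsEquivAut ℝ (Units.mk0 (2 * κ) (mul_ne_zero two_ne_zero hκ₀)), by ext; simp⟩
  refine ⟨hG.implicitFunction hn hinv, hG.contDiffAt_implicitFunction hn hinv,
    hG.implicitFunction_apply_self hn hinv, ?_⟩
  filter_upwards [hG.eventually_apply_implicitFunction hn hinv] with τ hτ
  exact sub_eq_zero.1 (hτ.trans hG₀)

lemma hasDerivAt_inv_one_add_mul {R : ℝ → ℝ} (hR : DifferentiableAt ℝ R 0) :
    HasDerivAt (fun τ ↦ (1 + τ * R τ)⁻¹) (-R 0) 0 := by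
  simpa using (((hasDerivAt_id' (0 : ℝ)).fun_mul hR.hasDerivAt).const_add 1).fun_inv (by simp)

lemma hasDerivAt_branch {b : ℝ → ℝ} {R : ι → ℝ → ℝ} (hb : DifferentiableAt ℝ b 0)
    (hb₀ : b 0 ≠ 0) (hR : ∀ i, DifferentiableAt ℝ (R i) 0)
    (hsum : ∀ᶠ τ in 𝓝 0, b τ ^ 2 = ∑ i, (1 + τ * R i τ)⁻¹) :
    HasDerivAt b (-(∑ i, R i 0) / (2 * b 0)) 0 := by
  have hsq : HasDerivAt (fun τ ↦ b τ ^ 2) (2 * b 0 * deriv b 0) 0 := by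
    simpa using hb.hasDerivAt.fun_pow 2
  have hinv : HasDerivAt (fun τ ↦ b τ ^ 2) (∑ i, -R i 0) 0 :=
    (HasDerivAt.fun_sum fun i _ ↦ hasDerivAt_inv_one_add_mul (hR i)).congr_of_eventuallyEq hsum
  have hderiv : deriv b 0 = -(∑ i, R i 0) / (2 * b 0) := by
    rw [eq_div_iff (mul_ne_zero two_ne_zero hb₀), mul_comm, hsq.unique hinv,
      Finset.sum_neg_distrib]
  exact hderiv ▸ hb.hasDerivAt

lemma exists_profile_branch [Nonempty ι] {c : ι → ℝ} (hc : ∀ i, 0 < c i) (ρ : ι → ℝ) :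
    ∃ (b : ℝ → ℝ) (u : ι → ℝ → ℝ), ContDiffAt ℝ 2 b 0 ∧ b 0 = √(Fintype.card ι) ∧
      (∀ i, ContDiffAt ℝ 2 (u i) 0 ∧ u i 0 = √(c i * (b 0 + (b 0)⁻¹))) ∧
      ∀ᶠ τ in 𝓝 0, 0 < b τ ∧ b τ ^ 2 = ∑ i, (1 + τ * u i τ)⁻¹ ∧ ∀ i, 0 ≤ u i τ ∧
        u i τ ^ 2 + ρ i * τ * u i τ = c i * (b τ + (b τ)⁻¹) * (1 + τ * u i τ) := by
  have hk : 0 < √(Fintype.card ι : ℝ) := by positivity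
  have hm : ∀ i {t : ℝ}, 0 < t → 0 < c i * (t + t⁻¹) := fun i t ht ↦
    mul_pos (hc i) (add_pos ht (inv_pos.2 ht))
  obtain ⟨b, hb, hb₀, hsum⟩ := exists_contDiffAt_branch hk.ne' (Real.sq_sqrt (by positivity))
    (n := 2) two_ne_zero (R := fun i p ↦ excess (ρ i) (c i * (p.2 + p.2⁻¹)) p.1) fun i ↦
      contDiffAt_excess (by fun_prop (disch := exact hk.ne')) contDiffAt_fst (hm i hk) _
  have hbpos : 0 < b 0 := hb₀ ▸ hk
  refine ⟨b, fun i τ ↦ excess (ρ i) (c i * (b τ + (b τ)⁻¹)) τ, hb, hb₀, fun i ↦ ⟨?_, ?_⟩, ?_⟩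
  · exact contDiffAt_excess (m := fun τ ↦ c i * (b τ + (b τ)⁻¹))
      (by fun_prop (disch := exact hbpos.ne')) contDiffAt_id (hm i hbpos) _
  · exact excess_zero_right _ _
  · filter_upwards [hb.continuousAt.eventually (lt_mem_nhds hbpos), hsum] with τ hbτ hsumτ
    exact ⟨hbτ, hsumτ, fun i ↦
      ⟨(excess_pos (hm i hbτ) _ _).le, excess_sq_add (hm i hbτ).le _ _⟩⟩

lemma contDiffAt_profile {n : WithTop ℕ∞} {b : ℝ → ℝ} {u : ι → ℝ → ℝ} (s : ℝ)
    (hb : ContDiffAt ℝ n b 0) (hb₀ : b 0 ≠ 0) (hu : ∀ i, ContDiffAt ℝ n (u i) 0) :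
    ContDiffAt ℝ n (fun τ ↦ profile s τ (b τ) (u · τ)) 0 := by
  refine .prodMk (by fun_prop) (contDiffAt_pi.2 fun i ↦ ?_)
  have : 1 + (0 : ℝ) * u i 0 ≠ 0 := by simp
  have := hu i
  fun_prop (disch := assumption)

lemma hasDerivAt_profile {ι : Type*} [Finite ι] {b : ℝ → ℝ} {b' : ℝ} {u : ι → ℝ → ℝ} (s : ℝ)
    (hb : HasDerivAt b b' 0) (hb₀ : b 0 ≠ 0) (hu : ∀ i, DifferentiableAt ℝ (u i) 0) :
    HasDerivAt (fun τ ↦ profile s τ (b τ) (u · τ))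
      (s * b', fun i ↦ -(s * u i 0 / b 0) - s * b' / b 0 ^ 2) 0 := by
  have := Fintype.ofFinite ι
  refine (hb.const_mul s).prodMk (hasDerivAt_pi.2 fun i ↦
    (((hasDerivAt_inv_one_add_mul (hu i)).fun_div hb hb₀).const_mul s).congr_deriv ?_)
  rw [zero_mul, add_zero, inv_one]
  field_simp

/-- The coefficient `√(1 + k) / (2 k^(3/4)) · s^(3/2)` common to all `√Δt` terms. -/
noncomputable def sqrtCoeff (k s : ℝ) : ℝ :=
  √(1 + k) / (2 * k ^ ((3 : ℝ) / 4)) * s ^ ((3 : ℝ) / 2)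

/-- The solution `(β_Σ, β)` of the constrained system at `Δt = 0`. -/
noncomputable def equilibriumLimit (ι : Type*) [Fintype ι] (s : ℝ) : ℝ × (ι → ℝ) :=
  (√(Fintype.card ι) * s, fun _ ↦ s / √(Fintype.card ι))

/-- The coefficient of `√Δt` in the expansion of the solution `(β_Σ, β)`. -/
noncomputable def equilibriumSlope (s : ℝ) (γ : ι → ℝ) : ℝ × (ι → ℝ) :=
  (-(sqrtCoeff (Fintype.card ι) s * ∑ j, √(γ j)), fun i ↦
    -(sqrtCoeff (Fintype.card ι) s * (2 * √(γ i) - (∑ j, √(γ j)) / Fintype.card ι)))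

lemma mul_sqrt_div_sqrt_eq_sqrtCoeff {k s γ : ℝ} (hk : 0 < k) (hs : 0 < s) (hγ : 0 ≤ γ) :
    s * √(γ * s * (√k + (√k)⁻¹)) / √k = 2 * sqrtCoeff k s * √γ := by
  have hmul : √k + (√k)⁻¹ = (1 + k) / √k := by
    have := Real.sq_sqrt hk.le
    field_simp
    linarith
  have hk34 : k ^ ((3 : ℝ) / 4) = √(√k) * √k := by
    rw [Real.sqrt_eq_rpow, Real.sqrt_eq_rpow, ← Real.rpow_mul hk.le, ← Real.rpow_add hk]
    norm_num
  have hs32 : s ^ ((3 : ℝ) / 2) = s * √s := by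
    rw [Real.sqrt_eq_rpow, ← Real.rpow_one_add' hs.le (by norm_num)]
    norm_num
  rw [hmul, mul_div_assoc', Real.sqrt_div (by positivity), Real.sqrt_mul (by positivity),
    Real.sqrt_mul hγ, sqrtCoeff, hk34, hs32]
  field_simp

lemma exists_isEquilibrium_curve [Nonempty ι] {s : ℝ} (hs : 0 < s) {γ : ι → ℝ}
    (hγ : ∀ i, 0 < γ i) (ρ : ι → ℝ) :
    ∃ f : ℝ → ℝ × (ι → ℝ), ContDiffAt ℝ 2 f 0 ∧ f 0 = equilibriumLimit ι s ∧
      HasDerivAt f (equilibriumSlope s γ) 0 ∧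
      ∀ᶠ τ in 𝓝[≥] 0, IsEquilibrium s (τ ^ 2) γ ρ (f τ).1 (f τ).2 := by
  have hk : 0 < (Fintype.card ι : ℝ) := by positivity
  obtain ⟨b, u, hb, hb₀, hu, hroot⟩ := exists_profile_branch (fun i ↦ mul_pos (hγ i) hs) ρ
  have hb₀' : b 0 ≠ 0 := hb₀ ▸ (Real.sqrt_pos.2 hk).ne'
  have hu' : ∀ i, DifferentiableAt ℝ (u i) 0 := fun i ↦ (hu i).1.differentiableAt two_ne_zero
  have hu₀ : ∀ i, s * u i 0 / b 0 = 2 * sqrtCoeff (Fintype.card ι) s * √(γ i) := fun i ↦ by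
    rw [(hu i).2, hb₀, mul_sqrt_div_sqrt_eq_sqrtCoeff hk hs (hγ i).le]
  have hb' := hasDerivAt_branch (hb.differentiableAt two_ne_zero) hb₀' hu'
    (hroot.mono fun _ h ↦ h.2.1)
  have hslope : s * (-(∑ i, u i 0) / (2 * b 0)) =
      -(sqrtCoeff (Fintype.card ι) s * ∑ i, √(γ i)) := by
    have : s * (∑ i, u i 0) / b 0 = 2 * sqrtCoeff (Fintype.card ι) s * ∑ i, √(γ i) := by
      simp_rw [Finset.mul_sum, Finset.sum_div, hu₀]
    linear_combination -this / 2
  refine ⟨fun τ ↦ profile s τ (b τ) (u · τ), contDiffAt_profile s hb hb₀' fun i ↦ (hu i).1,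
    ?_, ?_, ?_⟩
  · simp [profile, equilibriumLimit, hb₀, mul_comm, div_eq_mul_inv]
  · refine (hasDerivAt_profile s hb' hb₀' hu').congr_deriv (Prod.ext hslope (funext fun i ↦ ?_))
    simp only [equilibriumSlope]
    rw [hslope, hu₀, hb₀, Real.sq_sqrt hk.le]
    ring
  · filter_upwards [nhdsWithin_le_nhds hroot, self_mem_nhdsWithin] with τ ⟨hbτ, hsum, huτ⟩ hτ
    exact isEquilibrium_profile hs hbτ hτ (fun i ↦ (huτ i).1) (fun i ↦ (huτ i).2) hsum

theorem exists_isEquilibrium_isBigO [Nonempty ι] {s : ℝ} (hs : 0 < s) {γ : ι → ℝ}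
    (hγ : ∀ i, 0 < γ i) (ρ : ι → ℝ) :
    ∃ g : ℝ → ℝ × (ι → ℝ), (∀ᶠ Δt in 𝓝[≥] 0, IsEquilibrium s Δt γ ρ (g Δt).1 (g Δt).2) ∧
      (fun Δt ↦ g Δt - (equilibriumLimit ι s + √Δt • equilibriumSlope s γ)) =O[𝓝[≥] 0] id := by
  obtain ⟨f, hf, hf₀, hf', heq⟩ := exists_isEquilibrium_curve hs hγ ρ
  have hsqrt : Tendsto Real.sqrt (𝓝[≥] 0) (𝓝[≥] 0) :=
    tendsto_nhdsWithin_iff.2 ⟨(Real.continuous_sqrt.tendsto' 0 0 Real.sqrt_zero).mono_left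
      nhdsWithin_le_nhds, .of_forall Real.sqrt_nonneg⟩
  have hsq : ∀ᶠ Δt in 𝓝[≥] (0 : ℝ), √Δt ^ 2 = Δt := by
    filter_upwards [self_mem_nhdsWithin] with Δt hΔt using Real.sq_sqrt hΔt
  refine ⟨fun Δt ↦ f √Δt, ?_, ?_⟩
  · filter_upwards [hsqrt.eventually heq, hsq] with Δt hΔt hΔt'
    rwa [hΔt'] at hΔt
  · rw [← hf₀]
    refine ((isBigO_sub_add_smul_deriv hf hf').comp_tendsto hsqrt).congr' ?_ ?_
    · simp [Function.comp_def]
    · filter_upwards [hsq] with Δt hΔt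
      simp [hΔt]

end Equilibrium

/-- a branch `(β_Σ(Δt), β_1(Δt), …, β_k(Δt))` of unique solutions of the
constrained system exists for small `Δt ≥ 0`, with asymptotics
`β_i = k^{−1/2}(σ_K/σ_S) − ((1+k)^{1/2}/(2k^{3/4}))(2γ_i^{1/2} − (1/k)Σ_j γ_j^{1/2})(σ_K/σ_S)^{3/2}√Δt + O(Δt)`
and `β_Σ = k^{1/2}(σ_K/σ_S) − ((1+k)^{1/2}/(2k^{3/4}))Σ_j γ_j^{1/2}(σ_K/σ_S)^{3/2}√Δt + O(Δt)`. -/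
theorem stmt7 (k : ℕ) (hk : 1 ≤ k) (σS σK : ℝ) (hσS : 0 < σS) (hσK : 0 < σK)
    (γ ρ : Fin k → ℝ) (hγ : ∀ i, 0 < γ i) (hρ : ∀ i, 0 < ρ i) :
    ∃ ε > 0, ∃ C > 0, ∃ βSum : ℝ → ℝ, ∃ β : ℝ → Fin k → ℝ,
      ∀ Δt : ℝ, 0 ≤ Δt → Δt < ε →
        (βSum Δt = ∑ j, β Δt j ∧
          (∀ i, 0 = (1 - ρ i * Δt) * (β Δt i) ^ 2 * (βSum Δt) ^ 2
              - (2 - ρ i * Δt + βSum Δt * γ i * Δt) * (σK / σS) ^ 2 * β Δt i * βSum Δt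
              + (σK / σS) ^ 4 * (1 - β Δt i * γ i * Δt)) ∧
          0 < βSum Δt ∧
          (∀ i, 0 < β Δt i * βSum Δt ∧ β Δt i * βSum Δt ≤ σK ^ 2 / σS ^ 2)) ∧
        (∀ q : ℝ × (Fin k → ℝ),
          (q.1 = ∑ j, q.2 j ∧
            (∀ i, 0 = (1 - ρ i * Δt) * (q.2 i) ^ 2 * q.1 ^ 2
                - (2 - ρ i * Δt + q.1 * γ i * Δt) * (σK / σS) ^ 2 * q.2 i * q.1
                + (σK / σS) ^ 4 * (1 - q.2 i * γ i * Δt)) ∧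
            0 < q.1 ∧
            (∀ i, 0 < q.2 i * q.1 ∧ q.2 i * q.1 ≤ σK ^ 2 / σS ^ 2)) →
          q.1 = βSum Δt ∧ q.2 = β Δt) ∧
        (∀ i, |β Δt i -
            (σK / σS / Real.sqrt k
              - Real.sqrt (1 + k) / (2 * (k : ℝ) ^ ((3 : ℝ) / 4))
                * (2 * Real.sqrt (γ i) - (∑ j, Real.sqrt (γ j)) / k)
                * (σK / σS) ^ ((3 : ℝ) / 2) * Real.sqrt Δt)| ≤ C * Δt) ∧
        |βSum Δt -
            (Real.sqrt k * (σK / σS)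
              - Real.sqrt (1 + k) / (2 * (k : ℝ) ^ ((3 : ℝ) / 4))
                * (∑ j, Real.sqrt (γ j))
                * (σK / σS) ^ ((3 : ℝ) / 2) * Real.sqrt Δt)| ≤ C * Δt := by
  have : NeZero k := ⟨Nat.one_le_iff_ne_zero.1 hk⟩
  have hs : 0 < σK / σS := div_pos hσK hσS
  obtain ⟨g, hg, hgO⟩ := exists_isEquilibrium_isBigO hs hγ ρ
  obtain ⟨C, hC, hgC⟩ := hgO.exists_pos
  have hρ₁ : ∀ᶠ Δt in 𝓝[≥] (0 : ℝ), ∀ i, ρ i * Δt ≤ 1 := eventually_all.2 fun i ↦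
    nhdsWithin_le_nhds <|
      ((continuous_const_mul (ρ i)).tendsto' 0 0 (mul_zero _)).eventually_le_const one_pos
  obtain ⟨ε, hε, hsub⟩ := mem_nhdsGE_iff_exists_Ico_subset.1 (hg.and (hgC.bound.and hρ₁))
  simp only [← div_pow]
  refine ⟨ε, hε, C, hC, fun Δt ↦ (g Δt).1, fun Δt ↦ (g Δt).2, fun Δt h₀ hΔt ↦ ?_⟩
  obtain ⟨heq, hbound, hρΔt⟩ := hsub ⟨h₀, hΔt⟩
  rw [id, Real.norm_of_nonneg h₀] at hbound
  refine ⟨heq, fun q hq ↦ IsEquilibrium.unique hs.ne' h₀ (fun i ↦ (hγ i).le) (fun i ↦ (hρ i).le)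
    hρΔt hq heq, fun i ↦ ?_, ?_⟩
  · convert! ((norm_le_pi_norm _ i).trans (norm_snd_le _)).trans hbound using 3
    simp only [equilibriumLimit, equilibriumSlope, sqrtCoeff, Fintype.card_fin, Prod.smul_mk,
      Prod.mk_add_mk, Prod.snd_sub, Pi.sub_apply, Pi.add_apply, Pi.smul_apply, smul_eq_mul]
    ring
  · convert! (norm_fst_le _).trans hbound using 3
    simp only [equilibriumLimit, equilibriumSlope, sqrtCoeff, Fintype.card_fin, Prod.smul_mk,
      Prod.mk_add_mk, Prod.fst_sub, smul_eq_mul]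
    ring
end
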